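/- Assume ℓ(C) = 0, i.e. e_j ≥ 2 for all j. Let φ : S^{m+2} → S³ be the S-linear map φ(A_1,...,A_{m−1},a,b,c) = Σ_{j=1}^{m−1} A_j ρ_j + a σ^x + b σ^y + c σ^z. Then the kernel of φ is a free S-module with basis R_1,...,R_m, where for 1 ≤ j ≤ m−1 the vector R_j ∈ S^{m+2} has f_j in position j, zero in the other positions among the first m−1, and (−f_{j,x}, −f_{j,y}, −f_{j,z}) in the last three positions, and R_m = (−f_m, −f_m, ..., −f_m, −f_{m,x}, −f_{m,y}, −f_{m,z}). That is, ker φ equals the S-submodule generated by R_1,...,R_m, and R_1,...,R_m are linearly independent over S. (This gives the minimal resolution 0 → ⊕_{j=1}^m S(−d+2−e_j) → S(−d+2)^{m−1} ⊕ S(−d+1)³ of D₀(f).) -/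

import Mathlib

/-!
Write `f = ∏ f_j`, so that `∇f = ∑ (f / f_j) ∇f_j`. Since `f_j ρ_j = ∇f × ∇f_j` and
`a σ^x + b σ^y + c σ^z = ∇f × (a, b, c)`, setting `A_m = 0` and `v = (a, b, c)` gives
`f φ(A, v) = ∇f × (f v + ∑ A_j (f / f_j) ∇f_j)`. The entries of `∇f` have no common factor, so
`φ(A, v) = 0` if and only if the right-hand factor is `h ∇f` for some polynomial `h`, that is,
`f v + ∑ (A_j - h) (f / f_j) ∇f_j = 0`. Modulo `f_j` this forces `A_j - h = f_j B_j`, and cancelling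
`f` leaves `v = -∑ B_j ∇f_j`; eliminating `h` by `A_m = 0`, these equations say
`(A, v) = ∑ B_j R_j`. If `(A, v) = 0`, the same equations give `h ∇f = 0`, whence `B = 0`.

The geometry of the curves enters only through the absence of common factors in `∇f` and in each
`∇f_j`. It follows from the Nullstellensatz, a nonconstant polynomial in at least two variables
having a zero away from the origin, and from Euler's identity.
-/

open MvPolynomial

noncomputable abbrev S : Type := MvPolynomial (Fin 3) ℂ

/-- The gradient `∇g = (g_x, g_y, g_z)` of a polynomial `g ∈ S = ℂ[x,y,z]`. -/
noncomputable def grad (g : S) : Fin 3 → S := fun t => pderiv t g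

/-- The syzygy triple `ρ_j = Σ_{i≠j} (∏_{k≠i,j} f_k) (∇f_i × ∇f_j)`
of the 2-form `ω_j = df ∧ df_j/f_j`. -/
noncomputable def rho {m : ℕ} (F : Fin m → S) (j : Fin m) : Fin 3 → S :=
  ∑ i ∈ Finset.univ.erase j,
    (∏ k ∈ (Finset.univ.erase j).erase i, F k) • crossProduct (grad (F i)) (grad (F j))

/-- The Jacobian syzygy module `D₀(f) = {(a,b,c) ∈ S³ : a f_x + b f_y + c f_z = 0}`. -/
noncomputable def D0 (f : S) : Submodule S (Fin 3 → S) where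
  carrier := {v | ∑ t, v t * pderiv t f = 0}
  add_mem' {a b} ha hb := by
    simp only [Set.mem_setOf_eq, Pi.add_apply, add_mul, Finset.sum_add_distrib] at *
    rw [ha, hb, add_zero]
  zero_mem' := by simp
  smul_mem' c v hv := by
    simp only [Set.mem_setOf_eq, Pi.smul_apply, smul_eq_mul, mul_assoc, ← Finset.mul_sum] at *
    rw [hv, mul_zero]

/-- The syzygy triple `σ^x = (0, f_z, −f_y)` of the 2-form `df ∧ dx`. -/
noncomputable def sigx (f : S) : Fin 3 → S := ![0, pderiv 2 f, -pderiv 1 f]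
/-- The syzygy triple `σ^y = (−f_z, 0, f_x)` of the 2-form `df ∧ dy`. -/
noncomputable def sigy (f : S) : Fin 3 → S := ![-pderiv 2 f, 0, pderiv 0 f]
/-- The syzygy triple `σ^z = (f_y, −f_x, 0)` of the 2-form `df ∧ dz`. -/
noncomputable def sigz (f : S) : Fin 3 → S := ![pderiv 1 f, -pderiv 0 f, 0]

/-- The second-syzygy vectors `R_1, …, R_m ∈ S^{m+2}` (case `ℓ(C) = 0`): for `j ≤ m−1`,
`R_j` has `f_j` in position `j`, zero elsewhere among the first `m−1` coordinates, and
`(−f_{j,x}, −f_{j,y}, −f_{j,z})` in the last three; `R_m = (−f_m, …, −f_m, −f_{m,x}, −f_{m,y}, −f_{m,z})`. -/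
noncomputable def Rvec {m : ℕ} (F : Fin m → S) (j : Fin m) : (Fin (m - 1) ⊕ Fin 3) → S :=
  Sum.elim
    (fun i => (if (i : ℕ) = (j : ℕ) then F j else 0) + (if (j : ℕ) = m - 1 then -F j else 0))
    (fun t => -pderiv t (F j))

section Cofactor

variable {ι M : Type*} [Fintype ι] [DecidableEq ι] [CommMonoid M]

/-- The cofactor `∏_{k ≠ j} F_k` of `F_j` in the product of the family `F`, written `f / f_j` in
comments. -/
def cofactor (F : ι → M) (j : ι) : M := ∏ k ∈ Finset.univ.erase j, F k

lemma mul_cofactor (F : ι → M) (j : ι) : F j * cofactor F j = ∏ i, F i :=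
  Finset.mul_prod_erase _ _ (Finset.mem_univ j)

lemma dvd_cofactor (F : ι → M) {i j : ι} (h : i ≠ j) : F i ∣ cofactor F j :=
  Finset.dvd_prod_of_mem _ (by simp [h])

lemma isRelPrime_cofactor [DecompositionMonoid M] {F : ι → M}
    (h : Pairwise fun i j => IsRelPrime (F i) (F j)) (j : ι) : IsRelPrime (F j) (cofactor F j) :=
  IsRelPrime.prod_right fun _ hi => h (Finset.ne_of_mem_erase hi).symm

end Cofactor

lemma derivation_prod {ι R A : Type*} [Fintype ι] [DecidableEq ι] [CommSemiring R]
    [CommSemiring A] [Algebra R A] (D : Derivation R A A) (F : ι → A) :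
    D (∏ i, F i) = ∑ i, cofactor F i * D (F i) := by
  suffices h : ∀ s : Finset ι, D (∏ i ∈ s, F i) = ∑ i ∈ s, (∏ k ∈ s.erase i, F k) * D (F i) from
    h Finset.univ
  intro s
  induction s using Finset.induction_on with
  | empty => simp
  | insert a s ha ih =>
    have herase : ∀ i ∈ s, ∏ k ∈ (insert a s).erase i, F k = F a * ∏ k ∈ s.erase i, F k := by
      intro i hi
      rw [Finset.erase_insert_of_ne (ne_of_mem_of_not_mem hi ha).symm,
        Finset.prod_insert fun h => ha (Finset.mem_of_mem_erase h)]
    rw [Finset.prod_insert ha, Derivation.leibniz, ih, Finset.sum_insert ha,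
      Finset.erase_insert ha, smul_eq_mul, smul_eq_mul, Finset.mul_sum, add_comm]
    congr 1
    exact Finset.sum_congr rfl fun i hi => by rw [herase i hi, mul_assoc]

/-- A vector over a commutative monoid is primitive if every common divisor of its entries is a
unit. For the gradient of a polynomial this says that its critical locus has codimension at least
two. -/
def IsPrimitiveVec {κ M : Type*} [CommMonoid M] (u : κ → M) : Prop :=
  ∀ g : M, (∀ t, g ∣ u t) → IsUnit g

namespace IsPrimitiveVec

variable {κ R : Type*} [CommRing R]

lemma ne_zero [Nontrivial R] {u : κ → R} (hu : IsPrimitiveVec u) : u ≠ 0 := by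
  rintro rfl
  exact not_isUnit_zero (hu 0 fun _ => dvd_rfl)

variable [UniqueFactorizationMonoid R]

lemma of_forall_prime {u : κ → R} (h0 : u ≠ 0) (h : ∀ q, Prime q → ¬ ∀ t, q ∣ u t) :
    IsPrimitiveVec u := by
  intro g hg
  by_contra hunit
  have hg0 : g ≠ 0 := by
    rintro rfl
    exact h0 (funext fun t => zero_dvd_iff.mp (hg t))
  obtain ⟨q, hq, hqg⟩ := WfDvdMonoid.exists_irreducible_factor hunit hg0
  exact h q hq.prime fun t => hqg.trans (hg t)

variable [Finite κ]

lemma dvd_of_forall_dvd_mul {u : κ → R} (hu : IsPrimitiveVec u) {a c : R}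
    (h : ∀ t, a ∣ c * u t) : a ∣ c := by
  have := Fintype.ofFinite κ
  let _ : NormalizedGCDMonoid R := Classical.choice inferInstance
  have hgcd : IsUnit (Finset.univ.gcd u) := hu _ fun t => Finset.gcd_dvd (Finset.mem_univ t)
  have hdvd : a ∣ Finset.univ.gcd fun t => c * u t := Finset.dvd_gcd fun t _ => h t
  exact hgcd.dvd_mul_right.mp (hdvd.trans (Finset.gcd_mul_left' Finset.univ u c).dvd)

lemma exists_eq_smul [IsDomain R] {u w : κ → R} (hu : IsPrimitiveVec u)
    (h : ∀ s t, u s * w t = u t * w s) : ∃ c : R, w = c • u := by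
  obtain ⟨s, hs⟩ := Function.ne_iff.mp hu.ne_zero
  obtain ⟨c, hc⟩ : u s ∣ w s := hu.dvd_of_forall_dvd_mul fun t => ⟨w t, by rw [h s t, mul_comm]⟩
  refine ⟨c, funext fun t => mul_left_cancel₀ hs ?_⟩
  rw [h s t, hc, Pi.smul_apply, smul_eq_mul]
  ring

end IsPrimitiveVec

lemma mul_eq_mul_of_cross_eq_zero {R : Type*} [CommRing R] {u w : Fin 3 → R}
    (h : crossProduct u w = 0) (s t : Fin 3) : u s * w t = u t * w s := by
  have h0 : u 1 * w 2 - u 2 * w 1 = 0 := congrFun h 0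
  have h1 : u 2 * w 0 - u 0 * w 2 = 0 := congrFun h 1
  have h2 : u 0 * w 1 - u 1 * w 0 = 0 := congrFun h 2
  fin_cases s <;> fin_cases t <;> grind

lemma IsPrimitiveVec.cross_eq_zero_iff {R : Type*} [CommRing R] [IsDomain R]
    [UniqueFactorizationMonoid R] {u w : Fin 3 → R} (hu : IsPrimitiveVec u) :
    crossProduct u w = 0 ↔ ∃ c : R, w = c • u := by
  refine ⟨fun h => hu.exists_eq_smul (mul_eq_mul_of_cross_eq_zero h), ?_⟩
  rintro ⟨c, rfl⟩
  rw [map_smul, cross_self, smul_zero]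

section Residues

variable {ι κ R : Type*} [Fintype ι] [DecidableEq ι] [CommRing R]

lemma prod_smul_add_sum_mul_cofactor (F B : ι → R) (G : ι → κ → R) (v : κ → R) :
    (∏ i, F i) • v + ∑ j, (F j * B j * cofactor F j) • G j
      = (∏ i, F i) • (v + ∑ j, B j • G j) := by
  rw [smul_add, Finset.smul_sum]
  congr 1
  refine Finset.sum_congr rfl fun j _ => ?_
  rw [smul_smul, ← mul_cofactor F j, mul_right_comm]

/-- Modulo `F_j` every term except `D_j (f / f_j) G_j` vanishes; since `f / f_j` is prime to `F_j`
and `G_j` is primitive, `F_j` divides `D_j`. -/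
lemma dvd_of_prod_smul_add_sum_eq_zero [IsDomain R] [UniqueFactorizationMonoid R] [Finite κ]
    {F D : ι → R} {G : ι → κ → R} {v : κ → R} {j : ι} (hF : IsRelPrime (F j) (cofactor F j))
    (hG : IsPrimitiveVec (G j))
    (h : (∏ i, F i) • v + ∑ i, (D i * cofactor F i) • G i = 0) : F j ∣ D j := by
  refine hF.dvd_of_dvd_mul_right (hG.dvd_of_forall_dvd_mul fun t => ?_)
  have hrest : F j ∣ ∑ i ∈ Finset.univ.erase j, D i * cofactor F i * G i t :=
    Finset.dvd_sum fun i hi =>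
      ((dvd_cofactor F (Finset.ne_of_mem_erase hi).symm).mul_left _).mul_right _
  have hprod : F j ∣ (∏ i, F i) * v t := (Finset.dvd_prod_of_mem F (Finset.mem_univ j)).mul_right _
  have ht : (∏ i, F i) * v t + ∑ i, D i * cofactor F i * G i t = 0 := by
    simpa using congrFun h t
  rw [← Finset.sum_erase_add _ _ (Finset.mem_univ j), ← add_assoc] at ht
  exact (dvd_add_right (dvd_add hprod hrest)).mp (ht ▸ dvd_zero _)

lemma prod_smul_add_sum_eq_zero_iff [IsDomain R] [UniqueFactorizationMonoid R] [Finite κ]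
    {F D : ι → R} {G : ι → κ → R} {v : κ → R} (h0 : ∏ i, F i ≠ 0)
    (hF : ∀ j, IsRelPrime (F j) (cofactor F j)) (hG : ∀ j, IsPrimitiveVec (G j)) :
    (∏ i, F i) • v + ∑ j, (D j * cofactor F j) • G j = 0 ↔
      ∃ B : ι → R, (∀ j, D j = F j * B j) ∧ v + ∑ j, B j • G j = 0 := by
  constructor
  · intro h
    choose B hB using fun j => dvd_of_prod_smul_add_sum_eq_zero (hF j) (hG j) h
    simp only [hB, prod_smul_add_sum_mul_cofactor] at h
    exact ⟨B, hB, (smul_eq_zero.mp h).resolve_left h0⟩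
  · rintro ⟨B, hB, h⟩
    simp only [hB, prod_smul_add_sum_mul_cofactor, h, smul_zero]

end Residues

section Gradient

variable {σ k : Type*} [Field k]

lemma IsPrimitiveVec.squarefree_of_pderiv {f : MvPolynomial σ k}
    (hf : IsPrimitiveVec fun t => pderiv t f) : Squarefree f := by
  rintro g ⟨c, rfl⟩
  refine hf g fun t => ⟨2 * c * pderiv t g + g * pderiv t c, ?_⟩
  simp only [Derivation.leibniz, smul_eq_mul]
  ring

lemma dvd_of_forall_dvd_pderiv [Finite σ] [CharZero k] {f g : MvPolynomial σ k}
    {d : ℕ} (hf : f.IsHomogeneous d) (hd : d ≠ 0) (h : ∀ t, g ∣ pderiv t f) : g ∣ f := by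
  have := Fintype.ofFinite σ
  have hdf : g ∣ C (d : k) * f := by
    rw [map_natCast, ← nsmul_eq_mul, ← hf.sum_X_mul_pderiv]
    exact Finset.dvd_sum fun t _ => (h t).mul_left _
  exact ((isUnit_iff_ne_zero.mpr (Nat.cast_ne_zero.mpr hd)).map C).dvd_mul_left.mp hdf

lemma isPrimitiveVec_pderiv_prod {ι : Type*} [Fintype ι] [Finite σ] [CharZero k]
    {F : ι → MvPolynomial σ k} {d : ℕ} (hhom : (∏ i, F i).IsHomogeneous d) (hd : d ≠ 0)
    (hF : ∀ j, IsPrimitiveVec fun t => pderiv t (F j))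
    (hrel : Pairwise fun i j => IsRelPrime (F i) (F j)) :
    IsPrimitiveVec fun t => pderiv t (∏ i, F i) := by
  classical
  have hF0 : ∀ j, F j ≠ 0 := fun j h => (hF j).ne_zero (by ext1 t; simp [h])
  refine .of_forall_prime (fun h => ?_) fun q hq hdvd => ?_
  · have h0 : (0 : MvPolynomial σ k) ∣ ∏ i, F i :=
      dvd_of_forall_dvd_pderiv hhom hd fun t => zero_dvd_iff.mpr (congrFun h t)
    exact Finset.prod_ne_zero_iff.mpr (fun j _ => hF0 j) (zero_dvd_iff.mp h0)
  · obtain ⟨j, -, hqj⟩ := hq.exists_mem_finset_dvd (dvd_of_forall_dvd_pderiv hhom hd hdvd)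
    have hqc : ¬ q ∣ cofactor F j := fun h => hq.not_isUnit (isRelPrime_cofactor hrel j hqj h)
    refine hq.not_isUnit (hF j q fun t => (hq.dvd_or_dvd ?_).resolve_left hqc)
    have ht := hdvd t
    rw [derivation_prod, ← Finset.add_sum_erase _ _ (Finset.mem_univ j)] at ht
    refine (dvd_add_left (Finset.dvd_sum fun i hi => ?_)).mp ht
    exact (hqj.trans (dvd_cofactor F (Finset.ne_of_mem_erase hi).symm)).mul_right _

variable [IsAlgClosed k] [Finite σ] [Nontrivial σ]

lemma isUnit_of_eval_ne_zero {g : MvPolynomial σ k} (h : ∀ p ≠ 0, eval p g ≠ 0) : IsUnit g := by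
  have hpow : ∀ t, ∃ n, g ∣ X t ^ n := by
    intro t
    have hrad : (X t : MvPolynomial σ k) ∈ (Ideal.span {g}).radical := by
      rw [← vanishingIdeal_zeroLocus_eq_radical (K := k)]
      intro p hp
      have hpg : eval p g = 0 := hp g (Ideal.mem_span_singleton_self g)
      rw [not_imp_not.mp (h p) hpg]
      simp
    obtain ⟨n, hn⟩ := hrad
    exact ⟨n, Ideal.mem_span_singleton.mp hn⟩
  obtain ⟨s, t, hst⟩ := exists_pair_ne σ
  have hrel : IsRelPrime (X s : MvPolynomial σ k) (X t) :=
    X_prime.irreducible.isRelPrime_iff_not_dvd.mpr fun h => hst (X_dvd_X.mp h)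
  obtain ⟨a, ha⟩ := hpow s
  obtain ⟨b, hb⟩ := hpow t
  exact hrel.pow ha hb

lemma isPrimitiveVec_of_eval {κ : Type*} {u : κ → MvPolynomial σ k}
    (h : ∀ p, (∀ t, eval p (u t) = 0) → p = 0) : IsPrimitiveVec u := by
  refine fun g hg => isUnit_of_eval_ne_zero fun p hp hpg => hp (h p fun t => ?_)
  exact zero_dvd_iff.mp (hpg ▸ map_dvd (eval p) (hg t))

/-- On the zero locus of a common factor of `a` and `b`, both gradients are multiples of the
gradient of that factor. -/
lemma isRelPrime_of_linearIndependent_pderiv {a b : MvPolynomial σ k}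
    (h : ∀ p ≠ 0, eval p a = 0 → eval p b = 0 →
      LinearIndependent k ![fun t => eval p (pderiv t a), fun t => eval p (pderiv t b)]) :
    IsRelPrime a b := by
  rintro g ⟨c, rfl⟩ ⟨d, rfl⟩
  refine isUnit_of_eval_ne_zero fun p hp hpg => ?_
  have hpderiv : ∀ r : MvPolynomial σ k,
      (fun t => eval p (pderiv t (g * r))) = eval p r • fun t => eval p (pderiv t g) := by
    intro r
    ext t
    simp [Derivation.leibniz, hpg]
  have hind := h p hp (by simp [hpg]) (by simp [hpg])
  rw [hpderiv c, hpderiv d, LinearIndependent.pair_iff] at hind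
  have hc : eval p c = 0 := by
    simpa using (hind (eval p d) (-eval p c) (by module)).2
  simpa using hind 1 0 (by simp [hc])

lemma isPrimitiveVec_pderiv_prod_of_normalCrossing [CharZero k] {ι : Type*} [Fintype ι]
    [Nonempty ι] {F : ι → MvPolynomial σ k} {e : ι → ℕ} (he : ∀ j, 1 ≤ e j)
    (hhom : ∀ j, (F j).IsHomogeneous (e j))
    (hsmooth : ∀ j p, (∀ t, eval p (pderiv t (F j)) = 0) → p = 0)
    (hnc : ∀ i j, i ≠ j → ∀ p ≠ 0, eval p (F i) = 0 → eval p (F j) = 0 →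
      LinearIndependent k
        ![fun t => eval p (pderiv t (F i)), fun t => eval p (pderiv t (F j))]) :
    IsPrimitiveVec fun t => pderiv t (∏ i, F i) := by
  have hdeg : ∑ j, e j ≠ 0 := (Finset.sum_pos (fun j _ => he j) Finset.univ_nonempty).ne'
  exact isPrimitiveVec_pderiv_prod (IsHomogeneous.prod _ _ _ fun j _ => hhom j) hdeg
    (fun j => isPrimitiveVec_of_eval (hsmooth j))
    fun i j hij => isRelPrime_of_linearIndependent_pderiv (hnc i j hij)

end Gradient

lemma grad_prod {ι : Type*} [Fintype ι] [DecidableEq ι] (F : ι → S) :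
    grad (∏ i, F i) = ∑ i, cofactor F i • grad (F i) := by
  ext1 t
  simp [grad, derivation_prod]

lemma smul_rho {m : ℕ} (F : Fin m → S) (j : Fin m) :
    F j • rho F j = crossProduct (grad (∏ i, F i)) (grad (F j)) := by
  have hcof : ∀ i ∈ Finset.univ.erase j,
      F j * ∏ k ∈ (Finset.univ.erase j).erase i, F k = cofactor F i := by
    intro i hi
    rw [Finset.erase_right_comm, cofactor,
      Finset.mul_prod_erase _ _ (by simpa using (Finset.ne_of_mem_erase hi).symm)]
  rw [grad_prod, map_sum, LinearMap.sum_apply, ← Finset.sum_erase_add _ _ (Finset.mem_univ j),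
    rho, Finset.smul_sum]
  simp only [map_smul, LinearMap.smul_apply, cross_self, smul_zero, add_zero, smul_smul]
  exact Finset.sum_congr rfl fun i hi => by rw [hcof i hi]

lemma smul_sigx_add_smul_sigy_add_smul_sigz (f : S) (v : Fin 3 → S) :
    v 0 • sigx f + v 1 • sigy f + v 2 • sigz f = crossProduct (grad f) v := by
  rw [cross_apply]
  ext1 t
  fin_cases t <;> simp [sigx, sigy, sigz, grad] <;> ring

/-- The map `φ(A_1, …, A_{m-1}, a, b, c) = ∑ A_j ρ_j + a σ^x + b σ^y + c σ^z` into the Jacobian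
syzygies of `f = ∏ F_j`. -/
noncomputable def syzygyMap {m : ℕ} (F : Fin m → S) :
    (Fin (m - 1) ⊕ Fin 3 → S) →ₗ[S] (Fin 3 → S) where
  toFun A := (∑ j : Fin (m - 1), A (Sum.inl j) • rho F (Fin.castLE (Nat.sub_le m 1) j))
    + A (Sum.inr 0) • sigx (∏ i, F i) + A (Sum.inr 1) • sigy (∏ i, F i)
    + A (Sum.inr 2) • sigz (∏ i, F i)
  map_add' A B := by
    simp only [Pi.add_apply, add_smul, Finset.sum_add_distrib]
    abel
  map_smul' c A := by
    simp only [Pi.smul_apply, smul_eq_mul, mul_smul, ← Finset.smul_sum, ← smul_add,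
      RingHom.id_apply]

lemma syzygyMap_apply {m : ℕ} (F : Fin m → S) (A : Fin (m - 1) ⊕ Fin 3 → S) :
    syzygyMap F A = ∑ j : Fin (m - 1), A (Sum.inl j) • rho F (Fin.castLE (Nat.sub_le m 1) j)
      + crossProduct (grad (∏ i, F i)) (fun t => A (Sum.inr t)) := by
  rw [← smul_sigx_add_smul_sigy_add_smul_sigz, ← add_assoc, ← add_assoc]
  rfl

section Kernel

variable {n : ℕ}

/-- The coefficients `(A_1, …, A_{m-1}, 0)`, indexed by all the curves. The last one is zero
because `ρ_m` is not among the generators. With `m = n + 1` the index type `Fin (m - 1)` is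
definitionally `Fin n`, which is used from here on. -/
noncomputable def rhoCoeff (A : Fin n ⊕ Fin 3 → S) : Fin (n + 1) → S :=
  Fin.snoc (fun i => A (Sum.inl i)) 0

lemma prod_smul_syzygyMap (F : Fin (n + 1) → S) (A : Fin n ⊕ Fin 3 → S) :
    (∏ i, F i) • syzygyMap F A = crossProduct (grad (∏ i, F i))
      ((∏ i, F i) • (fun t => A (Sum.inr t))
        + ∑ j, (rhoCoeff A j * cofactor F j) • grad (F j)) := by
  have hrho : ∀ j, (rhoCoeff A j * cofactor F j) • crossProduct (grad (∏ i, F i)) (grad (F j))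
      = (∏ i, F i) • rhoCoeff A j • rho F j := by
    intro j
    rw [← smul_rho, smul_smul, smul_smul, ← mul_cofactor F j, mul_assoc,
      mul_comm (cofactor F j), mul_comm (rhoCoeff A j)]
  have hsum : ∑ j, rhoCoeff A j • rho F j = ∑ j : Fin n, A (Sum.inl j) • rho F j.castSucc := by
    simp [Fin.sum_univ_castSucc, rhoCoeff]
  have hmap : syzygyMap F A = ∑ j : Fin n, A (Sum.inl j) • rho F j.castSucc
      + crossProduct (grad (∏ i, F i)) (fun t => A (Sum.inr t)) := syzygyMap_apply F A
  simp only [map_add, map_smul, map_sum, hrho]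
  rw [← Finset.smul_sum, ← smul_add, hsum, hmap, add_comm (crossProduct _ _)]

lemma syzygyMap_eq_zero_iff {F : Fin (n + 1) → S} (h0 : ∏ i, F i ≠ 0)
    (hf : IsPrimitiveVec (grad (∏ i, F i))) (A : Fin n ⊕ Fin 3 → S) :
    syzygyMap F A = 0 ↔ ∃ h : S, (∏ i, F i) • (fun t => A (Sum.inr t))
      + ∑ j, ((rhoCoeff A j - h) * cofactor F j) • grad (F j) = 0 := by
  rw [← smul_eq_zero_iff_right h0, prod_smul_syzygyMap, hf.cross_eq_zero_iff]
  refine exists_congr fun h => ?_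
  rw [← sub_eq_zero, grad_prod, Finset.smul_sum, add_sub_assoc, ← Finset.sum_sub_distrib]
  simp only [smul_smul, ← sub_smul, ← sub_mul]

lemma sum_smul_Rvec (F B : Fin (n + 1) → S) :
    ∑ j, B j • Rvec F j = Sum.elim
      (fun i : Fin n => F i.castSucc * B i.castSucc - F (Fin.last n) * B (Fin.last n))
      (fun t => -∑ j, B j * pderiv t (F j)) := by
  have hne : ∀ j : Fin n, (j : ℕ) ≠ n := fun j => j.2.ne
  funext x
  rw [Finset.sum_apply]
  rcases x with i | t
  · rw [Fin.sum_univ_castSucc]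
    simp only [Nat.add_one_sub_one, Rvec, Fin.val_castSucc, ← Fin.ext_iff, hne, ↓reduceIte,
      add_tsub_cancel_right, add_zero, Pi.smul_apply, Sum.elim_inl, smul_eq_mul, mul_ite, mul_zero,
      Finset.sum_ite_eq, Finset.mem_univ, Fin.val_last, zero_add, mul_neg]
    ring
  · simp [Rvec]

lemma sum_smul_Rvec_eq_iff (F B : Fin (n + 1) → S) (A : Fin n ⊕ Fin 3 → S) :
    ∑ j, B j • Rvec F j = A ↔ (∃ h, ∀ j, rhoCoeff A j - h = F j * B j) ∧
      (fun t => A (Sum.inr t)) + ∑ j, B j • grad (F j) = 0 := by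
  have hcoeff : (∀ i : Fin n, F i.castSucc * B i.castSucc - F (Fin.last n) * B (Fin.last n)
      = A (Sum.inl i)) ↔ ∃ h, ∀ j, rhoCoeff A j - h = F j * B j := by
    constructor
    · intro hA
      refine ⟨-(F (Fin.last n) * B (Fin.last n)), Fin.lastCases ?_ fun i => ?_⟩
      · simp [rhoCoeff]
      · simp [rhoCoeff, ← hA i]
    · rintro ⟨h, hh⟩ i
      have hi : A (Sum.inl i) - h = F i.castSucc * B i.castSucc := by
        simpa [rhoCoeff] using hh i.castSucc
      have hlast : -h = F (Fin.last n) * B (Fin.last n) := by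
        simpa [rhoCoeff] using hh (Fin.last n)
      rw [← hi, ← hlast, sub_neg_eq_add, sub_add_cancel]
  have hgrad : (∀ t, -∑ j, B j * pderiv t (F j) = A (Sum.inr t)) ↔
      (fun t => A (Sum.inr t)) + ∑ j, B j • grad (F j) = 0 := by
    rw [add_eq_zero_iff_neg_eq', _root_.funext_iff]
    simp [grad]
  rw [sum_smul_Rvec, _root_.funext_iff, Sum.forall, ← hcoeff, ← hgrad]
  rfl

lemma linearIndependent_Rvec {F : Fin (n + 1) → S} (hf : grad (∏ i, F i) ≠ 0) :
    LinearIndependent S (Rvec F) := by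
  have h0 : ∏ i, F i ≠ 0 := fun h => hf (by ext1 t; simp [grad, h])
  refine Fintype.linearIndependent_iff.mpr fun B hB => ?_
  obtain ⟨⟨h, hh⟩, hgrad⟩ := (sum_smul_Rvec_eq_iff F B 0).mp hB
  have hFB : ∀ j, F j * B j = -h := fun j => by
    rw [← hh j, rhoCoeff]
    refine Fin.lastCases ?_ (fun i => ?_) j <;> simp
  have hsmul : -h • grad (∏ i, F i) = 0 := calc
    -h • grad (∏ i, F i) = ∑ j, (F j * B j * cofactor F j) • grad (F j) := by
      simp only [grad_prod, hFB, Finset.smul_sum, smul_smul]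
    _ = (∏ i, F i) • (0 + ∑ j, B j • grad (F j)) := by
      rw [← prod_smul_add_sum_mul_cofactor, smul_zero, zero_add]
    _ = 0 := smul_eq_zero_of_right _ hgrad
  have hh0 : -h = 0 := (smul_eq_zero.mp hsmul).resolve_right hf
  intro j
  refine (mul_eq_zero.mp ((hFB j).trans hh0)).resolve_left ?_
  exact Finset.prod_ne_zero_iff.mp h0 j (Finset.mem_univ j)

theorem ker_syzygyMap {F : Fin (n + 1) → S} (hF : ∀ j, IsPrimitiveVec (grad (F j)))
    (hf : IsPrimitiveVec (grad (∏ i, F i))) :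
    LinearMap.ker (syzygyMap F) = Submodule.span S (Set.range (Rvec F)) := by
  have h0 : ∏ i, F i ≠ 0 := hf.squarefree_of_pderiv.ne_zero
  have hrel : ∀ j, IsRelPrime (F j) (cofactor F j) := fun j =>
    .of_squarefree_mul (mul_cofactor F j ▸ hf.squarefree_of_pderiv)
  ext A
  rw [LinearMap.mem_ker, syzygyMap_eq_zero_iff h0 hf, Submodule.mem_span_range_iff_exists_fun]
  simp only [prod_smul_add_sum_eq_zero_iff h0 hrel hF, sum_smul_Rvec_eq_iff]
  rw [exists_comm]
  simp only [exists_and_right]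

end Kernel

theorem kernel_caseL0_general {m : ℕ} {F : Fin m → S} (hF : ∀ j, IsPrimitiveVec (grad (F j)))
    (hf : IsPrimitiveVec (grad (∏ i, F i))) :
    LinearMap.ker (syzygyMap F) = Submodule.span S (Set.range (Rvec F)) ∧
      LinearIndependent S (Rvec F) := by
  cases m with
  | zero => exact absurd (by ext1 t; simp [grad]) hf.ne_zero
  | succ n => exact ⟨ker_syzygyMap hF hf, linearIndependent_Rvec hf.ne_zero⟩

/-- if `ℓ(C) = 0` (all `e_j ≥ 2`), the kernel of
`φ : S^{m+2} → S³`, `φ(A_1,…,A_{m−1},a,b,c) = Σ A_j ρ_j + a σ^x + b σ^y + c σ^z`,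
is the free `S`-module with basis `R_1, …, R_m`. -/
theorem kernel_caseL0
    (m : ℕ) (hm : 4 ≤ m) (F : Fin m → S) (e : Fin m → ℕ)
    (he : ∀ j, 1 ≤ e j)
    (hhom : ∀ j, (F j).IsHomogeneous (e j))
    (hsmooth : ∀ j, ∀ p : Fin 3 → ℂ,
      (∀ t, eval p (pderiv t (F j)) = 0) → p = 0)
    (hnc : ∀ i j : Fin m, i ≠ j → ∀ p : Fin 3 → ℂ, p ≠ 0 →
      eval p (F i) = 0 → eval p (F j) = 0 →
      LinearIndependent ℂ
        ![fun t => eval p (pderiv t (F i)), fun t => eval p (pderiv t (F j))])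
    (htriple : ∀ i j k : Fin m, i ≠ j → i ≠ k → j ≠ k → ∀ p : Fin 3 → ℂ, p ≠ 0 →
      ¬(eval p (F i) = 0 ∧ eval p (F j) = 0 ∧ eval p (F k) = 0))
    (hl0 : ∀ j, 2 ≤ e j) :
    {A : (Fin (m - 1) ⊕ Fin 3) → S |
        (∑ j : Fin (m - 1), A (Sum.inl j) • rho F (Fin.castLE (Nat.sub_le m 1) j))
          + A (Sum.inr 0) • sigx (∏ i, F i) + A (Sum.inr 1) • sigy (∏ i, F i)
          + A (Sum.inr 2) • sigz (∏ i, F i) = 0}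
      = (Submodule.span S (Set.range (Rvec F)) : Set ((Fin (m - 1) ⊕ Fin 3) → S)) ∧
    LinearIndependent S (Rvec F) := by
  have : Nonempty (Fin m) := ⟨0, by lia⟩
  exact (kernel_caseL0_general (fun j => isPrimitiveVec_of_eval (hsmooth j))
    (isPrimitiveVec_pderiv_prod_of_normalCrossing he hhom hsmooth hnc)).imp_left
      (congrArg SetLike.coe)
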